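/- arXiv:cs/0402052 — 8 statements merged into one kernel-verified Lean document; each statement's English description precedes it below -/
import Mathlib

section
/- Let α be an irrational number and let a, b be coprime nonzero integers (b > 0) satisfying |α - a/b| < c/b², where c is a positive real number. Then there exist an integer m ≥ -1 and nonnegative integers r, s with rs < 2c such that either a = r·p_{m+1} + s·p_m and b = r·q_{m+1} + s·q_m, or a = r·p_{m+1} - s·p_m and b = r·q_{m+1} - s·q_m, where p_j/q_j denote the convergents of the continued fraction expansion of α. -/
/-!
The proof runs the Euclidean algorithm on the coordinates of `(a, b)` in the bases
`(p_{m+1}, q_{m+1}), (p_m, q_m)`.  Write `x_n = cfGauss α n` and `A_n = ⌊x_n⌋`.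

If `a ≤ b ⌊α⌋`, then `(a, b) = b (p_0, q_0) - s (p_{-1}, q_{-1})` with `s = b ⌊α⌋ - a ≥ 0`, and
`b s ≤ b |b α - a| < c`.  Otherwise the same basis gives nonnegative coordinates `r = b`,
`s = a - b ⌊α⌋`.  Given nonnegative coordinates `(r, s)` at some level, passing to the next level
replaces them by `(s, r - s A)`, where `A` is the next partial quotient.  As long as `s > 0` and
`r - s A ≥ 0`, the sum of the coordinates strictly decreases, so the process stops
(`legendre_descent`), in one of two ways.  If `s = 0`, then `r s = 0 < 2 c`.  Otherwise
`t = s A - r ≥ 0`, which yields the two representations with coordinates `(r, s)` and `(s, -t)`.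
Let `x` be the complete quotient with integer part `A`, and put `u = s x - r > t`.  The identity
`|q_{m+1} α - p_{m+1}| (q_{m+1} x + q_m) = 1` turns `b |b α - a| < c` into
`b u < c (q_{m+1} x + q_m)`, whence `r s u < c (u + r)` because `r q_{m+1} ≤ b`.  So `r s < 2 c` if
`r ≤ u`, and `s t ≤ s u < 2 c` if `u < r` (`legendre_stop`).
-/

/-- The Gauss-map orbit of `α`: `cfGauss α n` is the `n`-th complete quotient
`α_n` of the continued fraction expansion of `α` (`α_0 = α`,
`α_{n+1} = 1/(α_n - ⌊α_n⌋)`). -/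
noncomputable def cfGauss (α : ℝ) : ℕ → ℝ
  | 0 => α
  | n + 1 => 1 / Int.fract (cfGauss α n)

/-- The `n`-th partial quotient `a_n` of the continued fraction expansion of `α`
(so `cfA α 0 = ⌊α⌋`). -/
noncomputable def cfA (α : ℝ) (n : ℕ) : ℤ :=
  ⌊cfGauss α n⌋

/-- `cfP α (m + 1)` is the numerator `p_m` of the `m`-th convergent of the
continued fraction expansion of `α`; `cfP α 0 = p_{-1} = 1`, `cfP α 1 = p_0 = ⌊α⌋`,
and `p_i = a_i p_{i-1} + p_{i-2}`.  (For rational `α` the values stabilize once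
the expansion terminates.) -/
noncomputable def cfP (α : ℝ) : ℕ → ℤ
  | 0 => 1
  | 1 => ⌊α⌋
  | n + 2 =>
      if Int.fract (cfGauss α n) = 0 then cfP α (n + 1)
      else cfA α (n + 1) * cfP α (n + 1) + cfP α n

/-- `cfQ α (m + 1)` is the denominator `q_m` of the `m`-th convergent of the
continued fraction expansion of `α`; `cfQ α 0 = q_{-1} = 0`, `cfQ α 1 = q_0 = 1`,
and `q_i = a_i q_{i-1} + q_{i-2}`. -/
noncomputable def cfQ (α : ℝ) : ℕ → ℤ
  | 0 => 0
  | 1 => 1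
  | n + 2 =>
      if Int.fract (cfGauss α n) = 0 then cfQ α (n + 1)
      else cfA α (n + 1) * cfQ α (n + 1) + cfQ α n

theorem cfGauss_irrational {α : ℝ} (hirr : Irrational α) (n : ℕ) : Irrational (cfGauss α n) := by
  induction n with
  | zero => exact hirr
  | succ n ih =>
    have h : Irrational (Int.fract (cfGauss α n)) := ih.sub_intCast _
    simpa [cfGauss] using h.inv

theorem cfGauss_fract_pos {α : ℝ} (hirr : Irrational α) (n : ℕ) :
    0 < Int.fract (cfGauss α n) :=
  lt_of_le_of_ne (Int.fract_nonneg _)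
    ((cfGauss_irrational hirr n).sub_intCast ⌊cfGauss α n⌋).ne_zero.symm

theorem cfGauss_succ_gt_one {α : ℝ} (hirr : Irrational α) (n : ℕ) : 1 < cfGauss α (n + 1) := by
  rw [cfGauss, lt_div_iff₀ (cfGauss_fract_pos hirr n), one_mul]
  exact Int.fract_lt_one _

theorem cfA_succ_pos {α : ℝ} (hirr : Irrational α) (n : ℕ) : 1 ≤ cfA α (n + 1) :=
  Int.le_floor.2 (by simpa using (cfGauss_succ_gt_one hirr n).le)

theorem cfA_lt_cfGauss {α : ℝ} (hirr : Irrational α) (n : ℕ) :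
    (cfA α n : ℝ) < cfGauss α n := by
  have h := cfGauss_fract_pos hirr n
  rw [Int.fract] at h
  exact sub_pos.1 h

theorem cfGauss_sub_cfA_mul {α : ℝ} (hirr : Irrational α) (n : ℕ) :
    (cfGauss α n - cfA α n) * cfGauss α (n + 1) = 1 := by
  have h := cfGauss_fract_pos hirr n
  rw [cfGauss, cfA, ← Int.fract]
  field_simp

theorem cfP_rec {α : ℝ} (hirr : Irrational α) (n : ℕ) :
    cfP α (n + 2) = cfA α (n + 1) * cfP α (n + 1) + cfP α n := by
  rw [cfP, if_neg (cfGauss_fract_pos hirr n).ne']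

theorem cfQ_rec {α : ℝ} (hirr : Irrational α) (n : ℕ) :
    cfQ α (n + 2) = cfA α (n + 1) * cfQ α (n + 1) + cfQ α n := by
  rw [cfQ, if_neg (cfGauss_fract_pos hirr n).ne']

theorem cfQ_nonneg_and_succ_pos {α : ℝ} (hirr : Irrational α) (n : ℕ) :
    0 ≤ cfQ α n ∧ 0 < cfQ α (n + 1) := by
  induction n with
  | zero => simp [cfQ]
  | succ n ih =>
    refine ⟨ih.2.le, ?_⟩
    rw [cfQ_rec hirr]
    have := mul_pos (cfA_succ_pos hirr n) ih.2
    linarith [ih.1]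

/-- Consecutive errors `q_n α - p_n` have opposite signs and ratio the complete quotient. -/
theorem cf_error_step {α : ℝ} (hirr : Irrational α) (n : ℕ) :
    (cfQ α n * α - cfP α n : ℝ) =
      -cfGauss α (n + 1) * (cfQ α (n + 1) * α - cfP α (n + 1)) := by
  induction n with
  | zero =>
    have h := cfGauss_sub_cfA_mul hirr 0
    simp only [cfA, cfGauss] at h
    simp only [cfQ, cfP, cfGauss]
    push_cast
    linarith
  | succ n ih =>
    have h := cfGauss_sub_cfA_mul hirr (n + 1)
    rw [cfP_rec hirr, cfQ_rec hirr]
    push_cast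
    linear_combination
      -(cfQ α (n + 1) * α - cfP α (n + 1) : ℝ) * h + cfGauss α (n + 1 + 1) * ih

theorem cf_error_abs {α : ℝ} (hirr : Irrational α) (n : ℕ) :
    |(cfQ α (n + 1) * α - cfP α (n + 1) : ℝ)| *
      (cfQ α (n + 1) * cfGauss α (n + 1) + cfQ α n) = 1 := by
  induction n with
  | zero =>
    have h := cfGauss_fract_pos hirr 0
    have h' : Int.fract α ≠ 0 := h.ne'
    simp only [cfGauss] at h
    simp only [cfQ, cfP, cfGauss, Int.cast_one, one_mul, Int.cast_zero, add_zero]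
    rw [← Int.fract, abs_of_pos h]
    field_simp
  | succ n ih =>
    have h := cfGauss_sub_cfA_mul hirr (n + 1)
    have hx : 0 < cfGauss α (n + 1 + 1) := by linarith [cfGauss_succ_gt_one hirr (n + 1)]
    rw [cf_error_step hirr (n + 1), abs_mul, abs_neg, abs_of_pos hx] at ih
    have hQ := cfQ_rec hirr n
    have hQ' : (cfQ α (n + 1 + 1) : ℝ) = cfA α (n + 1) * cfQ α (n + 1) + cfQ α n := by
      exact_mod_cast hQ
    set E := |(cfQ α (n + 1 + 1) * α - cfP α (n + 1 + 1) : ℝ)|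
    linear_combination ih + E * cfGauss α (n + 1 + 1) * hQ' - E * cfQ α (n + 1) * h

/-- The stopping level of the descent: the coordinates `(r, s)` are nonnegative, but at the next
level the second coordinate would be `-(s A - r) ≤ 0`.  One of the two products is below `2 c`. -/
theorem legendre_stop {α : ℝ} (hirr : Irrational α) {a b : ℤ} (hb : 0 < b) {c : ℝ} (hc : 0 < c)
    (h : (b : ℝ) * |b * α - a| < c) (n : ℕ) (r s : ℤ) (hr : 0 ≤ r) (hs : 0 < s)
    (ht : 0 ≤ s * cfA α (n + 1) - r)
    (hP : a = r * cfP α (n + 1) + s * cfP α n) (hQ : b = r * cfQ α (n + 1) + s * cfQ α n) :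
    (r : ℝ) * s < 2 * c ∨ (s : ℝ) * ((s * cfA α (n + 1) - r : ℤ) : ℝ) < 2 * c := by
  have hb' : (0 : ℝ) < b := by exact_mod_cast hb
  have hr' : (0 : ℝ) ≤ r := by exact_mod_cast hr
  have hs' : (0 : ℝ) < s := by exact_mod_cast hs
  have ht' : (0 : ℝ) ≤ s * cfA α (n + 1) - r := by exact_mod_cast ht
  have hPr : (a : ℝ) = r * cfP α (n + 1) + s * cfP α n := by exact_mod_cast hP
  have hQr : (b : ℝ) = r * cfQ α (n + 1) + s * cfQ α n := by exact_mod_cast hQ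
  have hq0 : (0 : ℝ) ≤ cfQ α n := by exact_mod_cast (cfQ_nonneg_and_succ_pos hirr n).1
  have hq1 : (0 : ℝ) < cfQ α (n + 1) := by exact_mod_cast (cfQ_nonneg_and_succ_pos hirr n).2
  have hx1 := cfGauss_succ_gt_one hirr n
  have hAx := mul_lt_mul_of_pos_left (cfA_lt_cfGauss hirr (n + 1)) hs'
  have hE := cf_error_abs hirr n
  have herr : (b * α - a : ℝ) =
      -(s * cfGauss α (n + 1) - r) * (cfQ α (n + 1) * α - cfP α (n + 1)) := by
    rw [hPr, hQr]
    linear_combination (s : ℝ) * cf_error_step hirr n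
  push_cast
  set x := cfGauss α (n + 1)
  set q := (cfQ α (n + 1) : ℝ)
  set q' := (cfQ α n : ℝ)
  set A := (cfA α (n + 1) : ℝ)
  set u := (s : ℝ) * x - r with hu
  have hu0 : 0 < u := by linarith
  rw [herr, abs_mul, abs_neg, abs_of_pos hu0] at h
  have hW : 0 < q * x + q' := by positivity
  have h1 : b * u < c * (q * x + q') := by
    have := mul_lt_mul_of_pos_right h hW
    linear_combination this - b * u * hE
  have h2 : s * (q * x + q') = q * u + b := by rw [hQr]; ring
  have h3 : s * (b * u) < c * (q * u + b) := by
    rw [← h2]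
    have := mul_lt_mul_of_pos_left h1 hs'
    linarith
  have hrq : r * q ≤ b := by rw [hQr]; linarith [mul_nonneg hs'.le hq0]
  rcases hr'.eq_or_lt with hr0 | hr0
  · left
    rw [← hr0]
    linarith
  have h4 : r * s * u < c * (u + r) := by
    have e1 := mul_lt_mul_of_pos_left h3 hr0
    have e2 := mul_le_mul_of_nonneg_left hrq (mul_nonneg hc.le hu0.le)
    refine lt_of_mul_lt_mul_left (a := (b : ℝ)) ?_ hb'.le
    linarith
  rcases le_total (r : ℝ) u with hru | hru
  · left
    refine lt_of_mul_lt_mul_right (a := u) ?_ hu0.le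
    linarith [mul_le_mul_of_nonneg_left hru hc.le]
  · right
    have h5 : s * u < 2 * c := by
      refine lt_of_mul_lt_mul_right (a := (r : ℝ)) ?_ hr0.le
      linarith [mul_le_mul_of_nonneg_left hru hc.le]
    have : s * (s * A - r) ≤ s * u := mul_le_mul_of_nonneg_left (by linarith) hs'.le
    linarith

/-- Nonnegative coordinates at any level lead to a representation as required; `k` bounds the sum
of the coordinates, which decreases along the descent. -/
theorem legendre_descent {α : ℝ} (hirr : Irrational α) {a b : ℤ} (hb : 0 < b) {c : ℝ} (hc : 0 < c)
    (h : (b : ℝ) * |b * α - a| < c) (k : ℕ) : ∀ (n : ℕ) (r s : ℤ), 0 ≤ r → 0 ≤ s → r + s ≤ k →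
    a = r * cfP α (n + 1) + s * cfP α n → b = r * cfQ α (n + 1) + s * cfQ α n →
    ∃ (M : ℕ) (r s : ℤ), 0 ≤ r ∧ 0 ≤ s ∧ (r : ℝ) * s < 2 * c ∧
      ((a = r * cfP α (M + 1) + s * cfP α M ∧ b = r * cfQ α (M + 1) + s * cfQ α M) ∨
       (a = r * cfP α (M + 1) - s * cfP α M ∧ b = r * cfQ α (M + 1) - s * cfQ α M)) := by
  induction k with
  | zero =>
    intro n r s hr hs hk hP hQ
    have : s = 0 := by push_cast at hk; omega
    exact ⟨n, r, s, hr, hs, by rw [this]; simpa using hc, Or.inl ⟨hP, hQ⟩⟩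
  | succ k ih =>
    intro n r s hr hs hk hP hQ
    rcases hs.eq_or_lt with hs0 | hs0
    · exact ⟨n, r, s, hr, hs, by rw [← hs0]; simpa using hc, Or.inl ⟨hP, hQ⟩⟩
    have hA := cfA_succ_pos hirr n
    rcases le_total (s * cfA α (n + 1)) r with hlt | hlt
    · refine ih (n + 1) s (r - s * cfA α (n + 1)) hs (by linarith) ?_ ?_ ?_
      · have := mul_le_mul_of_nonneg_left hA hs
        push_cast at hk
        linarith
      · rw [cfP_rec hirr, hP]; ring
      · rw [cfQ_rec hirr, hQ]; ring
    · have ht : 0 ≤ s * cfA α (n + 1) - r := by linarith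
      rcases legendre_stop hirr hb hc h n r s hr hs0 ht hP hQ with h1 | h1
      · exact ⟨n, r, s, hr, hs, h1, Or.inl ⟨hP, hQ⟩⟩
      · refine ⟨n + 1, s, s * cfA α (n + 1) - r, hs, ht, h1, Or.inr ⟨?_, ?_⟩⟩
        · rw [cfP_rec hirr, hP]; ring
        · rw [cfQ_rec hirr, hQ]; ring

/-- (Extension of Legendre's theorem, irrational case.)
If `α` is irrational, `a`, `b` are coprime nonzero integers (`b > 0`) with
`|α - a/b| < c/b²` for a positive real `c`, then `(a, b) = (r p_{m+1} ± s p_m, r q_{m+1} ± s q_m)`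
for some `m ≥ -1` and nonnegative integers `r`, `s` with `rs < 2c`.
(Here the natural number `M` stands for `m + 1`, so `m = M - 1 ≥ -1`,
`p_m = cfP α M` and `p_{m+1} = cfP α (M + 1)`.) -/
theorem extended_legendre_irrational (α : ℝ) (hirr : Irrational α)
    (a b : ℤ) (ha : a ≠ 0) (hb : 0 < b) (hab : IsCoprime a b)
    (c : ℝ) (hc : 0 < c)
    (happrox : |α - (a : ℝ) / b| < c / (b : ℝ) ^ 2) :
    ∃ (M : ℕ) (r s : ℤ), 0 ≤ r ∧ 0 ≤ s ∧ (r : ℝ) * s < 2 * c ∧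
      ((a = r * cfP α (M + 1) + s * cfP α M ∧ b = r * cfQ α (M + 1) + s * cfQ α M) ∨
       (a = r * cfP α (M + 1) - s * cfP α M ∧ b = r * cfQ α (M + 1) - s * cfQ α M)) := by
  have hb' : (0 : ℝ) < b := by exact_mod_cast hb
  have h : (b : ℝ) * |b * α - a| < c := by
    have e : (b * α - a : ℝ) = b * (α - a / b) := by field_simp
    rw [e, abs_mul, abs_of_pos hb']
    rw [lt_div_iff₀ (by positivity)] at happrox
    linarith
  rcases le_total (b * ⌊α⌋) a with hle | hle
  · refine legendre_descent hirr hb hc h (b + (a - b * ⌊α⌋)).toNat 0 b (a - b * ⌊α⌋) hb.le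
      (by linarith) (Int.self_le_toNat _) ?_ ?_ <;> simp [cfP, cfQ]
  · refine ⟨0, b, b * ⌊α⌋ - a, hb.le, by linarith, ?_, Or.inr ⟨by simp [cfP], by simp [cfQ]⟩⟩
    have h1 : ((b * ⌊α⌋ - a : ℤ) : ℝ) ≤ |b * α - a| := by
      push_cast
      have := mul_le_mul_of_nonneg_left (Int.floor_le α) hb'.le
      exact le_trans (by linarith) (le_abs_self _)
    have := mul_le_mul_of_nonneg_left h1 hb'.le
    linarith
end

section
/- Let α be a rational number and let a, b be coprime nonzero integers (b > 0) satisfying |α - a/b| < c/b², where c is a positive real number. Then there exist an integer m ≥ -1 and nonnegative integers r, s with rs < 2c such that either a = r·p_{m+1} + s·p_m and b = r·q_{m+1} + s·q_m, or a = r·p_{m+1} - s·p_m and b = r·q_{m+1} - s·q_m, where p_j/q_j denote the convergents of the (finite) continued fraction expansion of α. -/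
/-- The standard relations between `α` and its convergents of shifted indices `M + 1` and `M`,
expressed through the fractional part of the `M`-th complete quotient.  Since `cfP` and `cfQ` are
constant after termination, they hold only while the expansion has not terminated before
step `M`. -/
structure CFInv (α : ℝ) (M : ℕ) : Prop where
  q_nonneg : 0 ≤ cfQ α M
  q_pos : 0 < cfQ α (M + 1)
  det : |cfP α (M + 1) * cfQ α M - cfP α M * cfQ α (M + 1)| = 1
  eq : α * (cfQ α (M + 1) + Int.fract (cfGauss α M) * cfQ α M)
    = cfP α (M + 1) + Int.fract (cfGauss α M) * cfP α M

theorem CFInv.zero (α : ℝ) : CFInv α 0 := by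
  refine ⟨by simp [cfQ], by simp [cfQ], by simp [cfQ, cfP], ?_⟩
  simp [cfQ, cfP, cfGauss]

theorem cfA_succ_pos_s1 {α : ℝ} {M : ℕ} (hy : Int.fract (cfGauss α M) ≠ 0) :
    1 ≤ cfA α (M + 1) := by
  have h0 : 0 < Int.fract (cfGauss α M) := lt_of_le_of_ne (Int.fract_nonneg _) (Ne.symm hy)
  have h1 := (Int.fract_lt_one (cfGauss α M)).le
  rw [cfA, cfGauss, Int.le_floor, le_div_iff₀ h0]
  simpa using h1

theorem cfA_succ_mul_fract_le {α : ℝ} {M : ℕ} (hy : Int.fract (cfGauss α M) ≠ 0) :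
    (cfA α (M + 1) : ℝ) * Int.fract (cfGauss α M) ≤ 1 := by
  have h0 : 0 < Int.fract (cfGauss α M) := lt_of_le_of_ne (Int.fract_nonneg _) (Ne.symm hy)
  rw [← le_div_iff₀ h0]
  exact Int.floor_le _

theorem cfP_add_two {α : ℝ} {M : ℕ} (hy : Int.fract (cfGauss α M) ≠ 0) :
    cfP α (M + 2) = cfA α (M + 1) * cfP α (M + 1) + cfP α M := by
  rw [cfP, if_neg hy]

theorem cfQ_add_two {α : ℝ} {M : ℕ} (hy : Int.fract (cfGauss α M) ≠ 0) :
    cfQ α (M + 2) = cfA α (M + 1) * cfQ α (M + 1) + cfQ α M := by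
  rw [cfQ, if_neg hy]

theorem CFInv.succ {α : ℝ} {M : ℕ} (h : CFInv α M) (hy : Int.fract (cfGauss α M) ≠ 0) :
    CFInv α (M + 1) := by
  have hA := cfA_succ_pos_s1 hy
  have hq := h.q_pos
  have hq0 := h.q_nonneg
  refine ⟨hq.le, ?_, ?_, ?_⟩
  · rw [cfQ_add_two hy]
    nlinarith
  · rw [cfQ_add_two hy, cfP_add_two hy, ← h.det, ← abs_neg]
    congr 1
    ring
  · -- the next fractional part is `1 / y - A`
    have hf : Int.fract (cfGauss α (M + 1)) = 1 / Int.fract (cfGauss α M) - cfA α (M + 1) := rfl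
    rw [hf, cfQ_add_two hy, cfP_add_two hy]
    have he := h.eq
    push_cast
    field_simp
    linear_combination he

/-- The key estimate: coordinates `r, s` of `(a, b)` with `r y ≤ s` satisfy
`r (s - r y) < c`. -/
theorem CFInv.key {α : ℝ} {M : ℕ} (h : CFInv α M) {a b r s : ℤ} {c : ℝ} (hb : 0 < b)
    (hc : |α * b - a| * b < c)
    (ha' : a = r * cfP α (M + 1) + s * cfP α M) (hb' : b = r * cfQ α (M + 1) + s * cfQ α M)
    (hrs : (r : ℝ) * Int.fract (cfGauss α M) ≤ s) :
    (r : ℝ) * (s - r * Int.fract (cfGauss α M)) < c := by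
  have hy0 : 0 ≤ Int.fract (cfGauss α M) := Int.fract_nonneg _
  have he := h.eq
  set y := Int.fract (cfGauss α M)
  have hq : (0 : ℝ) < cfQ α (M + 1) := by exact_mod_cast h.q_pos
  have hq0 : (0 : ℝ) ≤ cfQ α M := by exact_mod_cast h.q_nonneg
  have hdet : |(cfP α (M + 1) : ℝ) * cfQ α M - cfP α M * cfQ α (M + 1)| = 1 := by
    exact_mod_cast h.det
  have haR : (a : ℝ) = r * cfP α (M + 1) + s * cfP α M := by exact_mod_cast ha'
  have hbR : (b : ℝ) = r * cfQ α (M + 1) + s * cfQ α M := by exact_mod_cast hb'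
  have hbpos : (0 : ℝ) < b := by exact_mod_cast hb
  have hD : 0 < (cfQ α (M + 1) : ℝ) + y * cfQ α M := by positivity
  set D := (cfQ α (M + 1) : ℝ) + y * cfQ α M with hDdef
  have hprod : D * (α * b - a)
      = (s - r * y) * ((cfP α (M + 1) : ℝ) * cfQ α M - cfP α M * cfQ α (M + 1)) := by
    have : D * (α * b - a) = (α * D) * b - a * D := by ring
    rw [this, he, haR, hbR, hDdef]
    ring
  have habs : D * |α * b - a| = s - r * y := by
    have := congrArg abs hprod
    rwa [abs_mul, abs_mul, hdet, mul_one, abs_of_pos hD, abs_of_nonneg (sub_nonneg.2 hrs)] at this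
  have hbD : r * D ≤ b := by
    have : (b : ℝ) - r * D = (s - r * y) * cfQ α M := by rw [hbR, hDdef]; ring
    have := mul_nonneg (sub_nonneg.2 hrs) hq0
    linarith
  have h1 : (r * D) * (s - r * y) ≤ b * (s - r * y) :=
    mul_le_mul_of_nonneg_right hbD (sub_nonneg.2 hrs)
  have h2 : b * (s - r * y) < D * c := by
    rw [← habs]
    have := mul_lt_mul_of_pos_left hc hD
    linarith
  have h3 : D * (r * (s - r * y)) < D * c := by linarith
  exact lt_of_mul_lt_mul_left h3 hD.le

/-- The Euclidean descent on the coordinates of `(a, b)`, with fuel `n` bounding `r + s`. -/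
theorem CFInv.descent {α : ℝ} {a b : ℤ} {c : ℝ} (hb : 0 < b) (hc0 : 0 < c)
    (hc : |α * b - a| * b < c) (n : ℕ) :
    ∀ (M : ℕ) (r s : ℤ), CFInv α M → 0 ≤ r → 0 ≤ s → r + s ≤ n →
      a = r * cfP α (M + 1) + s * cfP α M → b = r * cfQ α (M + 1) + s * cfQ α M →
      ∃ (M : ℕ) (r s : ℤ), 0 ≤ r ∧ 0 ≤ s ∧ (r : ℝ) * s < 2 * c ∧
      ((a = r * cfP α (M + 1) + s * cfP α M ∧ b = r * cfQ α (M + 1) + s * cfQ α M) ∨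
       (a = r * cfP α (M + 1) - s * cfP α M ∧ b = r * cfQ α (M + 1) - s * cfQ α M)) := by
  induction n with
  | zero =>
    intro M r s _ hr hs hn ha' hb'
    have hr0 : r = 0 := by push_cast at hn; omega
    have hs0 : s = 0 := by push_cast at hn; omega
    simp [hr0, hs0] at hb'
    omega
  | succ n ih =>
    intro M r s h hr hs hn ha' hb'
    rcases hs.eq_or_lt with hs0 | hspos
    · exact ⟨M, r, s, hr, hs, by rw [← hs0]; simpa using hc0, Or.inl ⟨ha', hb'⟩⟩
    have hrR : (0 : ℝ) ≤ r := by exact_mod_cast hr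
    have hsR : (0 : ℝ) < s := by exact_mod_cast hspos
    by_cases hy : Int.fract (cfGauss α M) = 0
    · have hk := h.key hb hc ha' hb' (by rw [hy]; simpa using hsR.le)
      rw [hy] at hk
      exact ⟨M, r, s, hr, hs, by linarith, Or.inl ⟨ha', hb'⟩⟩
    have hA := cfA_succ_pos_s1 hy
    rcases le_or_gt r (cfA α (M + 1) * s) with hle | hgt
    · have hAy := cfA_succ_mul_fract_le hy
      have hy0 : 0 ≤ Int.fract (cfGauss α M) := Int.fract_nonneg _
      have hleR : (r : ℝ) ≤ cfA α (M + 1) * s := by exact_mod_cast hle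
      -- `y t ≤ s - r y` for `t = A s - r`, since `A y ≤ 1`
      have hty : Int.fract (cfGauss α M) * (cfA α (M + 1) * s - r)
          ≤ s - r * Int.fract (cfGauss α M) := by
        have := mul_le_mul_of_nonneg_right hAy hsR.le
        linarith
      have hrs : (r : ℝ) * Int.fract (cfGauss α M) ≤ s := by
        have := mul_nonneg hy0 (sub_nonneg.2 hleR)
        linarith
      have hk := h.key hb hc ha' hb' hrs
      rcases le_or_gt ((r : ℝ) * Int.fract (cfGauss α M)) (s / 2) with h1 | h1
      · have h2 : (r : ℝ) * (s / 2) ≤ r * (s - r * Int.fract (cfGauss α M)) :=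
          mul_le_mul_of_nonneg_left (by linarith) hrR
        exact ⟨M, r, s, hr, hs, by linarith, Or.inl ⟨ha', hb'⟩⟩
      · refine ⟨M + 1, s, cfA α (M + 1) * s - r, hs, by linarith, ?_, Or.inr ⟨?_, ?_⟩⟩
        · push_cast
          have h2 := mul_le_mul_of_nonneg_right h1.le (sub_nonneg.2 hleR)
          have h3 := mul_le_mul_of_nonneg_left hty hrR
          linarith
        · rw [cfP_add_two hy, ha']
          ring
        · rw [cfQ_add_two hy, hb']
          ring
    · refine ih (M + 1) s (r - cfA α (M + 1) * s) (h.succ hy) hs (by linarith) ?_ ?_ ?_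
      · push_cast at hn
        nlinarith
      · rw [cfP_add_two hy, ha']
        ring
      · rw [cfQ_add_two hy, hb']
        ring

/-- (Extension of Legendre's theorem, rational case.)
If `α` is rational, `a`, `b` are coprime nonzero integers (`b > 0`) with
`|α - a/b| < c/b²` for a positive real `c`, then `(a, b) = (r p_{m+1} ± s p_m, r q_{m+1} ± s q_m)`
for some `m ≥ -1` and nonnegative integers `r`, `s` with `rs < 2c`.
(Here the natural number `M` stands for `m + 1`, so `m = M - 1 ≥ -1`,
`p_m = cfP α M` and `p_{m+1} = cfP α (M + 1)`.) -/
theorem extended_legendre_rational (α : ℝ) (hrat : ∃ x : ℚ, α = (x : ℝ))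
    (a b : ℤ) (ha : a ≠ 0) (hb : 0 < b) (hab : IsCoprime a b)
    (c : ℝ) (hc : 0 < c)
    (happrox : |α - (a : ℝ) / b| < c / (b : ℝ) ^ 2) :
    ∃ (M : ℕ) (r s : ℤ), 0 ≤ r ∧ 0 ≤ s ∧ (r : ℝ) * s < 2 * c ∧
      ((a = r * cfP α (M + 1) + s * cfP α M ∧ b = r * cfQ α (M + 1) + s * cfQ α M) ∨
       (a = r * cfP α (M + 1) - s * cfP α M ∧ b = r * cfQ α (M + 1) - s * cfQ α M)) := by
  have hbR : (0 : ℝ) < b := by exact_mod_cast hb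
  have hc' : |α * b - a| * b < c := by
    have h1 : α * b - a = (α - (a : ℝ) / b) * b := by field_simp
    rw [h1, abs_mul, abs_of_pos hbR]
    rw [lt_div_iff₀ (by positivity)] at happrox
    linarith
  rcases le_or_gt 0 (a - b * ⌊α⌋) with hs | hs
  · exact CFInv.descent hb hc hc' (b + (a - b * ⌊α⌋)).toNat 0 b (a - b * ⌊α⌋) (CFInv.zero α) hb.le hs
      (Int.self_le_toNat _) (by simp [cfP]) (by simp [cfQ])
  · -- `a / b < ⌊α⌋ ≤ α`, so `b ⌊α⌋ - a ≤ |α b - a|`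
    refine ⟨0, b, b * ⌊α⌋ - a, hb.le, by linarith, ?_, Or.inr ⟨by simp [cfP], by simp [cfQ]⟩⟩
    have h1 : (b : ℝ) * ⌊α⌋ - a ≤ |α * b - a| := by
      refine le_trans ?_ (le_abs_self _)
      have := mul_le_mul_of_nonneg_left (Int.floor_le α) hbR.le
      linarith
    have h2 := mul_le_mul_of_nonneg_right h1 hbR.le
    push_cast
    linarith
end

section
/- Let α be an irrational number and let a, b be coprime integers with b > 0 and a/b < ⌊α⌋, satisfying |α - a/b| < c/b² for a positive real c. Then there exist positive integers r, s with rs < c such that a = r·⌊α⌋ - s and b = r (that is, a = r·p_0 - s·p_{-1} and b = r·q_0 - s·q_{-1}). -/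
/-- If `α` is irrational, `a`, `b` are coprime integers with
`b > 0` and `a/b < ⌊α⌋`, and `|α - a/b| < c/b²` for a positive real `c`, then
there are positive integers `r`, `s` with `rs < c`, `a = r ⌊α⌋ - s` and `b = r`
(that is, `a = r p_0 - s p_{-1}` and `b = r q_0 - s q_{-1}`). -/
theorem below_floor_case (α : ℝ) (hirr : Irrational α)
    (a b : ℤ) (hb : 0 < b) (hab : IsCoprime a b)
    (hlt : (a : ℝ) / b < (⌊α⌋ : ℝ))
    (c : ℝ) (hc : 0 < c)
    (happrox : |α - (a : ℝ) / b| < c / (b : ℝ) ^ 2) :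
    ∃ r s : ℤ, 0 < r ∧ 0 < s ∧ (r : ℝ) * s < c ∧ a = r * ⌊α⌋ - s ∧ b = r := by
  -- Since `a / b < ⌊α⌋ ≤ α`, the witness `s = b⌊α⌋ - a` satisfies
  -- `b s = b² (⌊α⌋ - a / b) ≤ b² |α - a / b| < c`.
  have hbR : (0 : ℝ) < b := by exact_mod_cast hb
  have hs : (a : ℝ) < ⌊α⌋ * b := (div_lt_iff₀ hbR).mp hlt
  refine ⟨b, b * ⌊α⌋ - a, hb, ?_, ?_, by ring, rfl⟩
  · have : a < ⌊α⌋ * b := by exact_mod_cast hs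
    linarith
  · have h : (⌊α⌋ : ℝ) - a / b < c / (b : ℝ) ^ 2 := by
      linarith [Int.floor_le α, le_abs_self (α - (a : ℝ) / b)]
    rw [lt_div_iff₀ (by positivity)] at h
    calc (b : ℝ) * ((b * ⌊α⌋ - a : ℤ) : ℝ) = ((⌊α⌋ : ℝ) - a / b) * (b : ℝ) ^ 2 := by
          push_cast
          field_simp
      _ < c := h
end

section
/- In the RSA setting, k/d - e/n > 2e/(n√n). -/
/-- In the RSA setting (`n = pq` with primes `p < q < 2p`,
`φ(n) = (p-1)(q-1)`, `e, d, k` positive, `e < n`, `ed - kφ(n) = 1`),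
`k/d - e/n > 2e/(n√n)`. -/
theorem rsa_lower_bound (p q n e d k : ℕ) (hp : p.Prime) (hq : q.Prime)
    (hpq : p < q) (hqp : q < 2 * p) (hn : n = p * q)
    (he : 0 < e) (hd : 0 < d) (hk : 0 < k) (hen : e < n)
    (hkey : e * d = k * ((p - 1) * (q - 1)) + 1) :
    (k : ℝ) / d - (e : ℝ) / n > 2 * e / ((n : ℝ) * Real.sqrt n) := by
  have hp2 := hp.two_le
  have hq2 := hq.two_le
  have hn4 : 4 ≤ n := by rw [hn]; nlinarith
  have hnR : (n : ℝ) = p * q := by rw [hn]; push_cast; ring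
  have hkeyR : (e : ℝ) * d = k * (((p : ℝ) - 1) * (q - 1)) + 1 := by
    have h := congrArg (Nat.cast : ℕ → ℝ) hkey
    push_cast [Nat.cast_sub (show 1 ≤ p by omega), Nat.cast_sub (show 1 ≤ q by omega)] at h
    exact h
  have hdR : (0 : ℝ) < d := by exact_mod_cast hd
  have hkR : (1 : ℝ) ≤ k := by exact_mod_cast hk
  have hpR : (0 : ℝ) < p := by exact_mod_cast hp.pos
  have hqR : (p : ℝ) < q := by exact_mod_cast hpq
  have hn4R : (4 : ℝ) ≤ n := by exact_mod_cast hn4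
  have hsq : Real.sqrt n * Real.sqrt n = n := Real.mul_self_sqrt (by linarith)
  have hr2 : 2 ≤ Real.sqrt n := Real.le_sqrt_of_sq_le (by linarith)
  set r := Real.sqrt n
  have hnpos : (0 : ℝ) < n := by linarith
  have hrpos : 0 < r := by linarith
  -- AM-GM, strict because `p ≠ q`
  have hs : 2 * r < (p : ℝ) + q := by
    apply lt_of_pow_lt_pow_left₀ 2 (by linarith)
    nlinarith [mul_pos (sub_pos.2 hqR) (sub_pos.2 hqR)]
  have hmain : 2 * ((e : ℝ) * d) < (k * n - e * d) * r := by
    have hφ : (e : ℝ) * d = k * (n - (p + q) + 1) + 1 := by rw [hkeyR, hnR]; ring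
    rw [hφ]
    have h1 : 0 < (k : ℝ) * (p + q - 2 * r) := mul_pos (by linarith) (by linarith)
    have h2 : 0 < (k : ℝ) * (p + q - 2 * r) * r := mul_pos h1 hrpos
    have h3 : 0 ≤ ((k : ℝ) - 1) * r := mul_nonneg (by linarith) hrpos.le
    have h4 : 0 ≤ (k : ℝ) * (r - 2) := mul_nonneg (by linarith) (by linarith)
    have h5 : (k : ℝ) * (r * r) = k * n := by rw [hsq]
    nlinarith
  have hdiff : (k : ℝ) / d - e / n - 2 * e / (n * r)
      = ((k * n - e * d) * r - 2 * (e * d)) / (d * n * r) := by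
    field_simp
  have : 0 < (k : ℝ) / d - e / n - 2 * e / (n * r) := by
    rw [hdiff]
    exact div_pos (by linarith) (by positivity)
  linarith
end

section
/- In the RSA setting, if additionally n > 10⁸, then k/d - e/n < 2.122·e/(n√n). -/
/-- In the RSA setting (`n = pq` with primes `p < q < 2p`,
`φ(n) = (p-1)(q-1)`, `e, d, k` positive, `e < n`, `ed - kφ(n) = 1`), if
additionally `n > 10⁸`, then `k/d - e/n < 2.122 e/(n√n)`. -/
theorem rsa_upper_bound (p q n e d k : ℕ) (hp : p.Prime) (hq : q.Prime)
    (hpq : p < q) (hqp : q < 2 * p) (hn : n = p * q) (hbig : n > 10 ^ 8)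
    (he : 0 < e) (hd : 0 < d) (hk : 0 < k) (hen : e < n)
    (hkey : e * d = k * ((p - 1) * (q - 1)) + 1) :
    (k : ℝ) / d - (e : ℝ) / n < 2.122 * e / ((n : ℝ) * Real.sqrt n) := by
  have hp2 := hp.two_le
  have hq2 := hq.two_le
  have hpR : (2 : ℝ) ≤ p := by exact_mod_cast hp2
  have hpqR : (p : ℝ) < q := by exact_mod_cast hpq
  have hqpR : (q : ℝ) < 2 * p := by exact_mod_cast hqp
  have hnR : (n : ℝ) = p * q := by exact_mod_cast hn
  have hbigR : (10 : ℝ) ^ 8 < n := by exact_mod_cast hbig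
  have heR : (0 : ℝ) < e := by exact_mod_cast he
  have hdR : (0 : ℝ) < d := by exact_mod_cast hd
  have hkeyR : (e : ℝ) * d = k * ((p - 1) * (q - 1)) + 1 := by
    have h : ((e * d : ℕ) : ℝ) = ((k * ((p - 1) * (q - 1)) + 1 : ℕ) : ℝ) := by rw [hkey]
    push_cast [Nat.cast_sub hp.one_le, Nat.cast_sub hq.one_le] at h
    exact h
  obtain ⟨s, hs⟩ : ∃ s, s = Real.sqrt n := ⟨_, rfl⟩
  have hss : s ^ 2 = n := by rw [hs]; exact Real.sq_sqrt (by positivity)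
  have hs4 : (10 : ℝ) ^ 4 < s := by
    rw [hs]; apply Real.lt_sqrt_of_sq_lt; linarith
  -- `2.12133` slightly exceeds `3 / √2`, so it is enough that `(p + q) ^ 2 < 4.5 * n`.
  have hsum : (p : ℝ) + q < 2.12133 * s := by
    apply lt_of_pow_lt_pow_left₀ 2 (by positivity)
    rw [mul_pow, hss, hnR]
    have h1 : 0 < (2 * (p : ℝ) - q) * (2 * q - p) :=
      mul_pos (by linarith) (by linarith)
    have h2 : (0 : ℝ) < p * q := mul_pos (by linarith) (by linarith)
    nlinarith
  have hphi : (0 : ℝ) < (p - 1) * (q - 1) := mul_pos (by linarith) (by linarith)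
  have hphi_eq : ((p : ℝ) - 1) * (q - 1) = s ^ 2 - (p + q - 1) := by
    rw [hss, hnR]; ring
  have hkd : (k : ℝ) / d < e / ((p - 1) * (q - 1)) := by
    rw [div_lt_div_iff₀ hdR hphi]; linarith
  -- After cancelling `e / n`, this is the remaining bound `(p + q - 1) / φ(n) ≤ 2.122 / √n`.
  have hmain : ((p : ℝ) + q - 1) * s ≤ 2.122 * ((p - 1) * (q - 1)) := by
    rw [hphi_eq]
    nlinarith
  have hs0 : 0 < s := by linarith
  have hfin : (e : ℝ) / ((p - 1) * (q - 1)) - e / n ≤ 2.122 * e / (n * s) := by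
    have h1 : (e : ℝ) / ((p - 1) * (q - 1)) - e / n
        = e / n * ((p + q - 1) / ((p - 1) * (q - 1))) := by
      have hn0 : (n : ℝ) ≠ 0 := by linarith
      rw [div_sub_div _ _ hphi.ne' hn0, div_mul_div_comm, mul_comm (n : ℝ), hnR]
      ring
    have h2 : 2.122 * (e : ℝ) / (n * s) = e / n * (2.122 / s) := by
      rw [div_mul_div_comm, mul_comm (2.122 : ℝ)]
    rw [h1, h2]
    apply mul_le_mul_of_nonneg_left _ (by positivity)
    rw [div_le_div_iff₀ hphi hs0]
    exact hmain
  rw [← hs]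
  linarith
end

section
/- Let n = pq where p and q are primes with p < q < 8p, let φ(n) = (p-1)(q-1), and let e, d, k be positive integers with e < n, n > 10⁸ and ed - k·φ(n) = 1. Then k/d - e/n < 3.183·e/(n√n). -/
/-- If `n = pq` with primes `p < q < 8p`,
`φ(n) = (p-1)(q-1)`, `e, d, k` positive, `e < n`, `n > 10⁸` and `ed - kφ(n) = 1`,
then `k/d - e/n < 3.183 e/(n√n)`. -/
theorem rsa_upper_bound_wide (p q n e d k : ℕ) (hp : p.Prime) (hq : q.Prime)
    (hpq : p < q) (hqp : q < 8 * p) (hn : n = p * q) (hbig : n > 10 ^ 8)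
    (he : 0 < e) (hd : 0 < d) (hk : 0 < k) (hen : e < n)
    (hkey : e * d = k * ((p - 1) * (q - 1)) + 1) :
    (k : ℝ) / d - (e : ℝ) / n < 3.183 * e / ((n : ℝ) * Real.sqrt n) := by
  have hp2 := hp.two_le
  have hq2 := hq.two_le
  have hkey' : (e : ℝ) * d = k * (((p : ℝ) - 1) * ((q : ℝ) - 1)) + 1 := by
    have h : ((e * d : ℕ) : ℝ) = ((k * ((p - 1) * (q - 1)) + 1 : ℕ) : ℝ) := by rw [hkey]
    push_cast [Nat.cast_sub hp.one_le, Nat.cast_sub hq.one_le] at h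
    exact h
  have hp' : (2 : ℝ) ≤ p := by exact_mod_cast hp2
  have hq' : (2 : ℝ) ≤ q := by exact_mod_cast hq2
  have hpq' : (p : ℝ) < q := by exact_mod_cast hpq
  have hqp' : (q : ℝ) < 8 * p := by exact_mod_cast hqp
  have hn' : (n : ℝ) = p * q := by exact_mod_cast hn
  have hbig' : (10 : ℝ) ^ 8 < n := by exact_mod_cast hbig
  have hd' : (0 : ℝ) < d := by exact_mod_cast hd
  have he' : (0 : ℝ) < e := by exact_mod_cast he
  have hn0 : (0 : ℝ) < n := by linarith [show (0 : ℝ) < 10 ^ 8 by norm_num]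
  have hr2 : Real.sqrt n * Real.sqrt n = n := Real.mul_self_sqrt hn0.le
  have hr : (10 : ℝ) ^ 4 < Real.sqrt n := by
    apply Real.lt_sqrt_of_sq_lt
    linarith [show ((10 : ℝ) ^ 4) ^ 2 = 10 ^ 8 by norm_num]
  generalize Real.sqrt n = r at hr2 hr ⊢
  have hr0 : 0 < r := by linarith [show (0 : ℝ) < 10 ^ 4 by norm_num]
  -- `(8p - q)(8q - p) ≥ 0` gives `(p + q)² ≤ 10.125 n`, and `3.182² > 10.125`.
  have hs : (p : ℝ) + q ≤ 3.182 * r := by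
    have h := mul_pos (sub_pos.2 hqp') (show (0 : ℝ) < 8 * q - p by linarith)
    refine le_of_sq_le_sq ?_ (by positivity)
    nlinarith
  have hφ : 0 < ((p : ℝ) - 1) * ((q : ℝ) - 1) := mul_pos (by linarith) (by linarith)
  have hφn : ((p : ℝ) - 1) * ((q : ℝ) - 1) = n - (p + q) + 1 := by rw [hn']; ring
  generalize ((p : ℝ) - 1) * ((q : ℝ) - 1) = φ at hφ hφn hkey'
  have h1 : (k : ℝ) / d < e / φ := by
    rw [div_lt_div_iff₀ hd' hφ]
    linarith
  -- The slack `0.001 n` from `3.182` to `3.183` absorbs the terms of order `r`, as `r > 10⁴`.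
  have h3 : (n - φ) * r ≤ 3.183 * φ := by
    have h4 := mul_le_mul_of_nonneg_right hs hr0.le
    have h5 := mul_lt_mul_of_pos_right hr hr0
    norm_num at h4 h5 hs ⊢
    nlinarith
  have h2 : (e : ℝ) / φ ≤ e / n + 3.183 * e / (n * r) := by
    have h6 : (e : ℝ) / n + 3.183 * e / (n * r) - e / φ
        = e * (3.183 * φ - (n - φ) * r) / (n * r * φ) := by
      field_simp
      ring
    have h7 : 0 ≤ e * (3.183 * φ - (n - φ) * r) / (n * r * φ) :=
      div_nonneg (mul_nonneg he'.le (by linarith)) (by positivity)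
    linarith
  linarith
end

section
/- In the RSA setting with n > 10⁸, if k/d equals the convergent p_m/q_m of the continued fraction expansion of e/n (with gcd(k,d)=1), then n√n/(4.244·e) < q_m·q_{m+1} < n√n/(2e). -/
/-- The expansion `α = (p_m + f p_{m-1}) / (q_m + f q_{m-1})`, with `f` the fractional part of the
`m`-th complete quotient. It survives termination, where `f` is `0` forever. -/
lemma cf_expansion (α : ℝ) (m : ℕ) :
    α * (cfQ α (m + 1) + Int.fract (cfGauss α m) * cfQ α m) =
      cfP α (m + 1) + Int.fract (cfGauss α m) * cfP α m := by
  induction m with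
  | zero => simp [cfQ, cfP, cfGauss]
  | succ m ih =>
    by_cases h : Int.fract (cfGauss α m) = 0
    · have hg : cfGauss α (m + 1) = 0 := by simp [cfGauss, h]
      rw [h] at ih
      simp only [cfQ, cfP, h, hg, if_true]
      simpa using ih
    · have hs : (cfA α (m + 1) : ℝ) + Int.fract (cfGauss α (m + 1)) =
          1 / Int.fract (cfGauss α m) := Int.floor_add_fract _
      simp only [cfQ, cfP, h, if_false]
      generalize Int.fract (cfGauss α (m + 1)) = f' at *
      generalize Int.fract (cfGauss α m) = f at *
      obtain rfl : f' = 1 / f - cfA α (m + 1) := by linarith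
      push_cast
      field_simp
      linear_combination ih

lemma cf_det (α : ℝ) (m : ℕ) (h : Int.fract (cfGauss α m) ≠ 0) :
    |(cfP α m : ℝ) * cfQ α (m + 1) - cfP α (m + 1) * cfQ α m| = 1 := by
  induction m with
  | zero => simp [cfQ, cfP]
  | succ m ih =>
    have h' : Int.fract (cfGauss α m) ≠ 0 := by
      intro h0
      exact h (by simp [cfGauss, h0])
    rw [← ih h', ← abs_neg]
    simp only [cfQ, cfP, h', if_false]
    push_cast
    congr 1
    ring

lemma cfA_pos (α : ℝ) (m : ℕ) (h : Int.fract (cfGauss α m) ≠ 0) : 1 ≤ cfA α (m + 1) := by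
  have h0 : 0 < Int.fract (cfGauss α m) := lt_of_le_of_ne (Int.fract_nonneg _) (Ne.symm h)
  refine Int.le_floor.mpr ?_
  rw [cfGauss, le_div_iff₀ h0]
  push_cast
  linarith [Int.fract_lt_one (cfGauss α m)]

lemma cfQ_pos (α : ℝ) (m : ℕ) : 0 ≤ cfQ α m ∧ 0 < cfQ α (m + 1) := by
  induction m with
  | zero => simp [cfQ]
  | succ m ih =>
    refine ⟨ih.2.le, ?_⟩
    by_cases h : Int.fract (cfGauss α m) = 0
    · simpa [cfQ, h] using ih.2
    · have := cfA_pos α m h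
      simp only [cfQ, h, if_false]
      nlinarith [ih.1, ih.2]

lemma cfQ_le_succ (α : ℝ) (m : ℕ) : cfQ α (m + 1) ≤ cfQ α (m + 2) := by
  by_cases h : Int.fract (cfGauss α m) = 0
  · simp [cfQ, h]
  · have := cfA_pos α m h
    have hq := cfQ_pos α m
    simp only [cfQ, h, if_false]
    nlinarith [hq.1, hq.2]

/-- Two-sided bound on the error of a convergent different from `α`: the product
`q_m q_{m+1}` lies between half the reciprocal of the error and that reciprocal. -/
lemma cf_gap_bounds (α : ℝ) (m : ℕ) (hne : α ≠ (cfP α (m + 1) : ℝ) / cfQ α (m + 1)) :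
    (cfQ α (m + 1) : ℝ) * cfQ α (m + 2) * |α - (cfP α (m + 1) : ℝ) / cfQ α (m + 1)| ≤ 1 ∧
    1 ≤ 2 * ((cfQ α (m + 1) : ℝ) * cfQ α (m + 2)) *
      |α - (cfP α (m + 1) : ℝ) / cfQ α (m + 1)| := by
  have hq0 : (0 : ℝ) < cfQ α (m + 1) := by exact_mod_cast (cfQ_pos α m).2
  have hle : (cfQ α (m + 1) : ℝ) ≤ cfQ α (m + 2) := by exact_mod_cast cfQ_le_succ α m
  have hexp := cf_expansion α m
  have hf : Int.fract (cfGauss α m) ≠ 0 := by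
    intro h0
    apply hne
    rw [h0] at hexp
    rw [eq_div_iff hq0.ne']
    linarith
  have hdet := cf_det α m hf
  have hs : (cfA α (m + 1) : ℝ) + Int.fract (cfGauss α (m + 1)) =
      1 / Int.fract (cfGauss α m) := Int.floor_add_fract _
  have hf0 := Int.fract_nonneg (cfGauss α (m + 1))
  have hf1 := Int.fract_lt_one (cfGauss α (m + 1))
  have hQ : (cfQ α (m + 2) : ℝ) = cfA α (m + 1) * cfQ α (m + 1) + cfQ α m := by
    simp [cfQ, hf]
  generalize Int.fract (cfGauss α (m + 1)) = f' at *
  generalize Int.fract (cfGauss α m) = f at *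
  have hT : 0 < (cfQ α (m + 2) : ℝ) + f' * cfQ α (m + 1) := by
    linarith [mul_nonneg hf0 hq0.le]
  -- `T = q_{m+1} + f' q_m` is the full denominator `α_{m+1} q_m + q_{m-1}`.
  have hTe : (cfQ α (m + 2) : ℝ) + f' * cfQ α (m + 1) = cfQ α (m + 1) / f + cfQ α m := by
    rw [hQ]
    linear_combination (cfQ α (m + 1) : ℝ) * hs
  have hid : cfQ α (m + 1) * (α - (cfP α (m + 1) : ℝ) / cfQ α (m + 1)) *
      ((cfQ α (m + 2) : ℝ) + f' * cfQ α (m + 1)) =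
      (cfP α m : ℝ) * cfQ α (m + 1) - cfP α (m + 1) * cfQ α m := by
    rw [hTe]
    field_simp
    linear_combination (cfQ α (m + 1) : ℝ) * hexp
  have habs := congrArg abs hid
  rw [hdet, abs_mul, abs_mul, abs_of_pos hq0, abs_of_pos hT] at habs
  generalize |α - (cfP α (m + 1) : ℝ) / cfQ α (m + 1)| = ε at *
  have hε : 0 < ε := by
    by_contra hc
    have : cfQ α (m + 1) * ε ≤ 0 := mul_nonpos_of_nonneg_of_nonpos hq0.le (not_lt.mp hc)
    nlinarith
  have hqe : 0 < cfQ α (m + 1) * ε := by positivity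
  constructor
  · nlinarith [mul_nonneg hqe.le (mul_nonneg hf0 hq0.le)]
  · nlinarith [mul_le_mul_of_nonneg_left
      (show f' * cfQ α (m + 1) ≤ cfQ α (m + 2) by nlinarith) hqe.le]

/-- Estimates on `N = k (p + q - 1) - 1` in terms of `ed = k (n - p - q + 1) + 1`, with `r = √n`. -/
lemma rsa_numerator_bounds (p q r k : ℝ) (hpq : p < q) (hqp : q < 2 * p)
    (hr : r ^ 2 = p * q) (hr4 : 10 ^ 4 < r) (hk : 1 ≤ k) :
    2 * (k * ((p - 1) * (q - 1)) + 1) < r * (k * (p + q - 1) - 1) ∧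
    2 * r * (k * (p + q - 1) - 1) < 4.244 * (k * ((p - 1) * (q - 1)) + 1) := by
  have h1 : 2 * r < p + q := by
    apply lt_of_pow_lt_pow_left₀ 2 (by linarith)
    nlinarith [mul_pos (sub_pos.mpr hpq) (sub_pos.mpr hpq)]
  -- `2.12133` exceeds `3/√2`, and twice it is still below `4.244`.
  have h2 : p + q < 2.12133 * r := by
    apply lt_of_pow_lt_pow_left₀ 2 (by positivity)
    nlinarith [mul_pos (sub_pos.mpr hqp) (show 0 < 2 * q - p by linarith)]
  have hphi : (p - 1) * (q - 1) = r ^ 2 - (p + q) + 1 := by rw [hr]; ring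
  rw [hphi]
  generalize p + q = s at *
  constructor
  · have h3 : 0 < r * (s - 1) - 2 * (r ^ 2 - s + 1) - r - 2 := by nlinarith
    nlinarith [mul_nonneg (sub_nonneg.mpr hk)
      (show 0 ≤ r * (s - 1) - 2 * (r ^ 2 - s + 1) by linarith)]
  · have h3 : 0 < 4.244 * (r ^ 2 - s + 1) - 2 * r * (s - 1) := by
      norm_num at *
      nlinarith
    nlinarith [mul_pos (show 0 < k by linarith) h3]

/-- In the RSA setting with `n > 10⁸`, if `k/d` equals the
convergent `p_m/q_m` of the continued fraction expansion of `e/n` (with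
`gcd(k, d) = 1`), then `n√n/(4.244 e) < q_m q_{m+1} < n√n/(2e)`.
(Here `q_m = cfQ (e/n) (m + 1)` and `q_{m+1} = cfQ (e/n) (m + 2)`.) -/
theorem rsa_denominator_window (p q n e d k : ℕ) (hp : p.Prime) (hq : q.Prime)
    (hpq : p < q) (hqp : q < 2 * p) (hn : n = p * q) (hbig : n > 10 ^ 8)
    (he : 0 < e) (hd : 0 < d) (hk : 0 < k) (hen : e < n)
    (hkd : Nat.Coprime k d)
    (hkey : e * d = k * ((p - 1) * (q - 1)) + 1)
    (m : ℕ)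
    (hconv : (k : ℝ) / d =
      (cfP ((e : ℝ) / n) (m + 1) : ℝ) / (cfQ ((e : ℝ) / n) (m + 1) : ℝ)) :
    (n : ℝ) * Real.sqrt n / (4.244 * e) <
        (cfQ ((e : ℝ) / n) (m + 1) : ℝ) * (cfQ ((e : ℝ) / n) (m + 2) : ℝ) ∧
      (cfQ ((e : ℝ) / n) (m + 1) : ℝ) * (cfQ ((e : ℝ) / n) (m + 2) : ℝ) <
        (n : ℝ) * Real.sqrt n / (2 * e) := by
  have hp1 := hp.one_lt
  have hq1 := hq.one_lt
  have hnR : (n : ℝ) = p * q := by exact_mod_cast hn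
  have hn0 : (0 : ℝ) < n := by exact_mod_cast (by omega : 0 < n)
  have he0 : (0 : ℝ) < e := by exact_mod_cast he
  have hd0 : (0 : ℝ) < d := by exact_mod_cast hd
  have hk1 : (1 : ℝ) ≤ k := by exact_mod_cast hk
  have hkeyR : (e : ℝ) * d = k * (((p : ℝ) - 1) * ((q : ℝ) - 1)) + 1 := by
    have := congrArg (Nat.cast (R := ℝ)) hkey
    push_cast [Nat.cast_sub hp1.le, Nat.cast_sub hq1.le] at this
    exact this
  have hsq : Real.sqrt n ^ 2 = n := Real.sq_sqrt hn0.le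
  have hr4 : (10 : ℝ) ^ 4 < Real.sqrt n := by
    apply Real.lt_sqrt_of_sq_lt
    have : ((10 ^ 8 : ℕ) : ℝ) < n := by exact_mod_cast hbig
    push_cast at this
    linarith
  obtain ⟨hu, hl⟩ := rsa_numerator_bounds p q (Real.sqrt n) k
    (by exact_mod_cast hpq) (by exact_mod_cast hqp)
    (hsq.trans hnR) hr4 hk1
  rw [← hkeyR] at hu hl
  have hgap : (k : ℝ) / d - e / n = (k * (p + q - 1) - 1) / (d * n) := by
    field_simp
    rw [hnR]
    linear_combination -hkeyR
  generalize Real.sqrt n = r at *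
  generalize (k : ℝ) * (p + q - 1) - 1 = N at *
  have hr0 : 0 < r := by linarith
  have hN : 0 < N := by
    have : 0 < r * N := by nlinarith [mul_pos he0 hd0]
    exact pos_of_mul_pos_right this hr0.le
  have hpos : 0 < N / (d * n) := by positivity
  obtain ⟨h1, h2⟩ := cf_gap_bounds ((e : ℝ) / n) m (by rw [← hconv]; intro h; linarith)
  rw [← hconv, abs_sub_comm, hgap, abs_of_pos hpos] at h1 h2
  generalize (cfQ ((e : ℝ) / n) (m + 1) : ℝ) * (cfQ ((e : ℝ) / n) (m + 2) : ℝ) = U at *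
  rw [mul_div_assoc', div_le_one (by positivity)] at h1
  rw [mul_div_assoc', one_le_div (by positivity)] at h2
  have hU : 0 < U := by
    have : 0 < U * N := by nlinarith [mul_pos hd0 hn0]
    exact pos_of_mul_pos_left this hN.le
  constructor
  · rw [div_lt_iff₀ (by positivity)]
    refine lt_of_mul_lt_mul_right ?_ hd0.le
    calc (n : ℝ) * r * d = r * (d * n) := by ring
      _ ≤ r * (2 * U * N) := mul_le_mul_of_nonneg_left h2 hr0.le
      _ = U * (2 * r * N) := by ring
      _ < U * (4.244 * (e * d)) := mul_lt_mul_of_pos_left hl hU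
      _ = U * (4.244 * e) * d := by ring
  · rw [lt_div_iff₀ (by positivity)]
    refine lt_of_mul_lt_mul_right ?_ hd0.le
    calc U * (2 * e) * d = U * (2 * (e * d)) := by ring
      _ < U * (r * N) := mul_lt_mul_of_pos_left hu hU
      _ = r * (U * N) := by ring
      _ ≤ r * (d * n) := mul_le_mul_of_nonneg_left h1 hr0.le
      _ = n * r * d := by ring
end

section
/- In the RSA setting with n > 10⁸, let p_j/q_j and a_j be the convergents and partial quotients of e/n, let m be the largest odd integer with p_m/q_m - e/n > 2.122·e/(n√n), set D = d/n^{1/4}, and define r = d·p_m - k·q_m, s = k·q_{m+1} - d·p_{m+1} (so k = r·p_{m+1} + s·p_m, d = r·q_{m+1} + s·q_m). If e/n - p_{m+1}/q_{m+1} ≤ 2.122·e/(n√n), then s < d/q_m, r < √(2.122·(a_{m+2}+2))·D, and s < √(2.122·(a_{m+2}+2))·(a_{m+1}+1)·D. -/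
/-- The standard facts on convergents at an index where the expansion has not yet stopped. -/
lemma cf_invariant (α : ℝ) : ∀ i : ℕ, Int.fract (cfGauss α i) ≠ 0 →
    α * (cfGauss α (i + 1) * cfQ α (i + 1) + cfQ α i)
      = cfGauss α (i + 1) * cfP α (i + 1) + cfP α i ∧
    cfP α (i + 1) * cfQ α i - cfP α i * cfQ α (i + 1) = (-1) ^ (i + 1) ∧
    0 ≤ cfQ α i ∧ cfQ α i ≤ cfQ α (i + 1) ∧ 0 < cfQ α (i + 1) ∧ 1 ≤ cfA α (i + 1) := by
  have hA : ∀ i : ℕ, Int.fract (cfGauss α i) ≠ 0 → 1 ≤ cfA α (i + 1) := by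
    intro i hi
    have h0 : 0 < Int.fract (cfGauss α i) := lt_of_le_of_ne (Int.fract_nonneg _) (Ne.symm hi)
    have h1 : Int.fract (cfGauss α i) < 1 := Int.fract_lt_one _
    rw [cfA, Int.le_floor, cfGauss, le_div_iff₀ h0]
    push_cast
    linarith
  intro i
  induction i with
  | zero =>
    intro hi
    refine ⟨?_, by simp [cfP, cfQ], by simp [cfQ], by simp [cfQ], by simp [cfQ], hA 0 hi⟩
    have h := Int.floor_add_fract α
    simp only [cfGauss, cfP, cfQ] at hi ⊢
    field_simp
    push_cast
    linarith
  | succ i ih =>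
    intro hi
    have hi' : Int.fract (cfGauss α i) ≠ 0 := by
      intro h
      apply hi
      simp [cfGauss, h]
    obtain ⟨h1, h2, h3, h4, h5, h6⟩ := ih hi'
    have hP : cfP α (i + 2) = cfA α (i + 1) * cfP α (i + 1) + cfP α i := by
      simp [cfP, hi']
    have hQ : cfQ α (i + 2) = cfA α (i + 1) * cfQ α (i + 1) + cfQ α i := by
      simp [cfQ, hi']
    have hx : cfGauss α (i + 1) = cfA α (i + 1) + Int.fract (cfGauss α (i + 1)) :=
      (Int.floor_add_fract _).symm
    have hx2 : cfGauss α (i + 1 + 1) = 1 / Int.fract (cfGauss α (i + 1)) := rfl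
    refine ⟨?_, ?_, h5.le, ?_, ?_, hA _ hi⟩
    · rw [hx2, show i + 1 + 1 = i + 2 from rfl, hP, hQ]
      generalize Int.fract (cfGauss α (i + 1)) = f at *
      rw [hx] at h1
      field_simp
      push_cast
      linarith
    · rw [show i + 1 + 1 = i + 2 from rfl, hP, hQ, pow_succ, ← h2]
      ring
    · rw [show i + 1 + 1 = i + 2 from rfl, hQ]
      nlinarith
    · rw [show i + 1 + 1 = i + 2 from rfl, hQ]
      nlinarith

/-- Once the expansion has stopped, the convergent equals `α`. -/
lemma cf_terminated (α : ℝ) : ∀ i : ℕ, Int.fract (cfGauss α i) = 0 →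
    α * cfQ α (i + 1) = cfP α (i + 1) ∧ 0 < cfQ α (i + 1) := by
  intro i
  induction i with
  | zero =>
    intro hi
    have h := Int.floor_add_fract α
    simp only [cfGauss] at hi
    simp only [cfP, cfQ]
    refine ⟨?_, by norm_num⟩
    push_cast
    linarith
  | succ i ih =>
    intro hi
    by_cases hi' : Int.fract (cfGauss α i) = 0
    · have hP : cfP α (i + 1 + 1) = cfP α (i + 1) := by simp [cfP, hi']
      have hQ : cfQ α (i + 1 + 1) = cfQ α (i + 1) := by simp [cfQ, hi']
      rw [hP, hQ]
      exact ih hi'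
    · obtain ⟨h1, h2, h3, h4, h5, h6⟩ := cf_invariant α i hi'
      have hP : cfP α (i + 1 + 1) = cfA α (i + 1) * cfP α (i + 1) + cfP α i := by
        simp [cfP, hi']
      have hQ : cfQ α (i + 1 + 1) = cfA α (i + 1) * cfQ α (i + 1) + cfQ α i := by
        simp [cfQ, hi']
      have hx : cfGauss α (i + 1) = cfA α (i + 1) := by
        have := Int.floor_add_fract (cfGauss α (i + 1))
        rw [hi, add_zero] at this
        exact this.symm
      rw [hP, hQ]
      refine ⟨?_, by nlinarith⟩
      rw [hx] at h1
      push_cast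
      exact h1

lemma rsa_key_lower {p q n e d k : ℕ} (hp : 2 ≤ p) (hq : 2 ≤ q) (hn : n = p * q)
    (hk : 0 < k) (hkey : e * d = k * ((p - 1) * (q - 1)) + 1) : d * e < k * n := by
  obtain ⟨a, rfl⟩ : ∃ a, p = a + 2 := ⟨p - 2, by omega⟩
  obtain ⟨b, rfl⟩ : ∃ b, q = b + 2 := ⟨q - 2, by omega⟩
  subst hn
  rw [show a + 2 - 1 = a + 1 from rfl, show b + 2 - 1 = b + 1 from rfl] at hkey
  nlinarith [Nat.zero_le (k * a), Nat.zero_le (k * b)]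

/-- `k/d < e/n + 2.122 e/(n√n)`. Multiplying `kφ(n) < ed` out, this reduces to
`n√n ≤ φ(n)(√n + 2.122)`, where `φ(n) ≥ n - 2.1214√n + 1`; here `√n ≥ 10⁴` is needed. -/
lemma rsa_key_upper {p q n e d k : ℕ} (hp : 2 ≤ p) (hpq : p < q) (hqp : q < 2 * p)
    (hn : n = p * q) (hbig : n > 10 ^ 8) (hkey : e * d = k * ((p - 1) * (q - 1)) + 1) :
    (k : ℝ) < d * ((e : ℝ) / n + 2.122 * e / ((n : ℝ) * Real.sqrt n)) := by
  have hkeyR : (e : ℝ) * d = k * (((p : ℝ) - 1) * (q - 1)) + 1 := by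
    have h := congrArg (Nat.cast : ℕ → ℝ) hkey
    rw [Nat.cast_add, Nat.cast_mul, Nat.cast_mul, Nat.cast_mul, Nat.cast_sub (by omega),
      Nat.cast_sub (by omega)] at h
    simpa using h
  have hnR : (n : ℝ) = p * q := by exact_mod_cast hn
  have hpR : (2 : ℝ) ≤ p := by exact_mod_cast hp
  have hpqR : (p : ℝ) < q := by exact_mod_cast hpq
  have hqpR : (q : ℝ) < 2 * p := by exact_mod_cast hqp
  have hbigR : (10 : ℝ) ^ 8 < n := by exact_mod_cast hbig
  set w := Real.sqrt n with hw
  have hw2 : w * w = n := Real.mul_self_sqrt (by positivity)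
  have hw4 : (10 : ℝ) ^ 4 < w := by
    rw [hw]
    apply Real.lt_sqrt_of_sq_lt
    norm_num at hbigR ⊢
    exact hbigR
  have hw0 : 0 < w := by linarith
  have hS : (p : ℝ) + q ≤ 2.1214 * w := by
    apply le_of_sq_le_sq _ (by positivity)
    nlinarith [mul_pos (sub_pos.2 hqpR) (show (0 : ℝ) < 2 * q - p by linarith)]
  have hphi : ((p : ℝ) - 1) * (q - 1) = w * w - (p + q) + 1 := by rw [hw2, hnR]; ring
  have hphi0 : 0 < ((p : ℝ) - 1) * (q - 1) := by
    apply mul_pos <;> linarith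
  have hmain : w * w * w ≤ (((p : ℝ) - 1) * (q - 1)) * (w + 2.122) := by
    rw [hphi]
    nlinarith
  have hed : (k : ℝ) * (((p : ℝ) - 1) * (q - 1)) < e * d := by linarith
  have heq : (d : ℝ) * ((e : ℝ) / n + 2.122 * e / ((n : ℝ) * w))
      = e * d * (w + 2.122) / (w * w * w) := by
    rw [← hw2]
    field_simp
  rw [heq, lt_div_iff₀ (by positivity)]
  calc (k : ℝ) * (w * w * w) ≤ k * ((((p : ℝ) - 1) * (q - 1)) * (w + 2.122)) := by gcongr
    _ = k * (((p : ℝ) - 1) * (q - 1)) * (w + 2.122) := by ring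
    _ < e * d * (w + 2.122) := by gcongr

/-- A denominator of `e/(pq)`, with `0 < e < pq`, is at least the smaller prime. -/
lemma prime_le_denominator {p q n e : ℕ} (hp : p.Prime) (hq : q.Prime) (hpq : p < q)
    (hn : n = p * q) (he : 0 < e) (hen : e < n) {P Q : ℤ} (hQ : 0 < Q)
    (h : (e : ℤ) * Q = P * n) : (p : ℤ) ≤ Q := by
  lift Q to ℕ using hQ.le
  have hdvd : n ∣ e * Q := by
    have : (n : ℤ) ∣ ((e * Q : ℕ) : ℤ) := ⟨P, by push_cast; rw [h]; ring⟩
    exact_mod_cast this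
  have hQ' : 0 < Q := by exact_mod_cast hQ
  by_contra hlt
  push Not at hlt
  have hlt' : Q < p := by exact_mod_cast hlt
  have c1 : Nat.Coprime p Q :=
    (Nat.Prime.coprime_iff_not_dvd hp).2 fun h => by have := Nat.le_of_dvd hQ' h; omega
  have c2 : Nat.Coprime q Q :=
    (Nat.Prime.coprime_iff_not_dvd hq).2 fun h => by have := Nat.le_of_dvd hQ' h; omega
  have c : Nat.Coprime n Q := by rw [hn]; exact Nat.Coprime.mul_left c1 c2
  have := Nat.le_of_dvd he (c.dvd_of_dvd_mul_right hdvd)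
  omega

/-- In the RSA setting with `n > 10⁸`, let `p_j/q_j`, `a_j`
be the convergents and partial quotients of `e/n`, let `m` be the largest odd
integer with `p_m/q_m - e/n > 2.122 e/(n√n)`, `D = d/n^{1/4}`, and
`r = d p_m - k q_m`, `s = k q_{m+1} - d p_{m+1}`.  If
`e/n - p_{m+1}/q_{m+1} ≤ 2.122 e/(n√n)`, then `s < d/q_m`,
`r < √(2.122 (a_{m+2} + 2)) D` and `s < √(2.122 (a_{m+2} + 2)) (a_{m+1} + 1) D`.
(Here `p_m = cfP (e/n) (m + 1)`, `p_{m+1} = cfP (e/n) (m + 2)`,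
`a_j = cfA (e/n) j`.) -/
theorem vvt_bounds_case_two (p q n e d k : ℕ) (hp : p.Prime) (hq : q.Prime)
    (hpq : p < q) (hqp : q < 2 * p) (hn : n = p * q) (hbig : n > 10 ^ 8)
    (he : 0 < e) (hd : 0 < d) (hk : 0 < k) (hen : e < n)
    (hkd : Nat.Coprime k d)
    (hkey : e * d = k * ((p - 1) * (q - 1)) + 1)
    (m : ℕ) (hmodd : Odd m)
    (hm : (cfP ((e : ℝ) / n) (m + 1) : ℝ) / (cfQ ((e : ℝ) / n) (m + 1) : ℝ) - (e : ℝ) / n > 2.122 * e / ((n : ℝ) * Real.sqrt n))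
    (hmax : ∀ m' : ℕ, Odd m' → ((cfP ((e : ℝ) / n) (m' + 1) : ℝ) / (cfQ ((e : ℝ) / n) (m' + 1) : ℝ) - (e : ℝ) / n > 2.122 * e / ((n : ℝ) * Real.sqrt n)) → m' ≤ m)
    (D : ℝ) (hD : D = (d : ℝ) / (n : ℝ) ^ ((1 : ℝ) / 4))
    (r s : ℤ)
    (hr : r = (d : ℤ) * cfP ((e : ℝ) / n) (m + 1) - (k : ℤ) * cfQ ((e : ℝ) / n) (m + 1))
    (hs : s = (k : ℤ) * cfQ ((e : ℝ) / n) (m + 2) - (d : ℤ) * cfP ((e : ℝ) / n) (m + 2))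
    (hcase : (e : ℝ) / n - (cfP ((e : ℝ) / n) (m + 2) : ℝ) / (cfQ ((e : ℝ) / n) (m + 2) : ℝ) ≤
      2.122 * e / ((n : ℝ) * Real.sqrt n)) :
    (s : ℝ) < (d : ℝ) / (cfQ ((e : ℝ) / n) (m + 1) : ℝ) ∧
      (r : ℝ) < Real.sqrt (2.122 * ((cfA ((e : ℝ) / n) (m + 2) : ℝ) + 2)) * D ∧
      (s : ℝ) < Real.sqrt (2.122 * ((cfA ((e : ℝ) / n) (m + 2) : ℝ) + 2)) *
        ((cfA ((e : ℝ) / n) (m + 1) : ℝ) + 1) * D := by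
  set α : ℝ := (e : ℝ) / n with hα
  have hn0 : (0 : ℝ) < n := by
    have : 0 < n := by omega
    exact_mod_cast this
  have he0 : (0 : ℝ) < e := by exact_mod_cast he
  have hd0 : (0 : ℝ) < d := by exact_mod_cast hd
  have hα1 : α < 1 := by
    rw [hα, div_lt_one hn0]
    exact_mod_cast hen
  have hw0 : 0 < Real.sqrt n := Real.sqrt_pos.2 hn0
  have hc0 : 0 < 2.122 * (e : ℝ) / ((n : ℝ) * Real.sqrt n) := by positivity
  have hup := rsa_key_upper hp.two_le hpq hqp hn hbig hkey
  have hlow : (d : ℝ) * α < k := by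
    have h := rsa_key_lower hp.two_le hq.two_le hn hk hkey
    have hcast : (d : ℝ) * e < k * n := by exact_mod_cast h
    rw [hα, ← mul_div_assoc, div_lt_iff₀ hn0]
    exact hcast
  -- The `m`-th convergent differs from `α`, so the expansion has not stopped at `m`.
  have hfm : Int.fract (cfGauss α m) ≠ 0 := by
    intro h
    obtain ⟨h1, h2⟩ := cf_terminated α m h
    have h2' : (0 : ℝ) < cfQ α (m + 1) := by exact_mod_cast h2
    rw [← h1, mul_div_assoc, div_self h2'.ne', mul_one, sub_self] at hm
    linarith
  obtain ⟨h1, h2, h3, h4, h5, h6⟩ := cf_invariant α m hfm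
  have hP : cfP α (m + 2) = cfA α (m + 1) * cfP α (m + 1) + cfP α m := by simp [cfP, hfm]
  have hQ : cfQ α (m + 2) = cfA α (m + 1) * cfQ α (m + 1) + cfQ α m := by simp [cfQ, hfm]
  have hx : cfGauss α (m + 1) = cfA α (m + 1) + Int.fract (cfGauss α (m + 1)) :=
    (Int.floor_add_fract _).symm
  have ha2 : cfA α (m + 2) = ⌊1 / Int.fract (cfGauss α (m + 1))⌋ := rfl
  have hterm : Int.fract (cfGauss α (m + 1)) = 0 →
      α * cfQ α (m + 2) = cfP α (m + 2) := fun h => (cf_terminated α (m + 1) h).1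
  have hf0 : 0 ≤ Int.fract (cfGauss α (m + 1)) := Int.fract_nonneg _
  have hf1 : Int.fract (cfGauss α (m + 1)) < 1 := Int.fract_lt_one _
  rw [hmodd.add_one.neg_one_pow] at h2
  rw [hx] at h1
  generalize Int.fract (cfGauss α (m + 1)) = f at *
  have hdet : cfP α (m + 1) * cfQ α (m + 2) - cfP α (m + 2) * cfQ α (m + 1) = 1 := by
    rw [hP, hQ, ← h2]
    ring
  have hQle : cfQ α (m + 2) ≤ (cfA α (m + 1) + 1) * cfQ α (m + 1) := by
    rw [hQ]
    linarith
  have hQmono : cfQ α (m + 1) ≤ cfQ α (m + 2) := by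
    rw [hQ]
    nlinarith
  have hrel : α * (cfQ α (m + 2) + f * cfQ α (m + 1)) = cfP α (m + 2) + f * cfP α (m + 1) := by
    rw [hP, hQ]
    push_cast
    linarith
  clear h1 h2 h3 h4 hP hQ hx hmax
  generalize cfP α (m + 1) = P' at *
  generalize cfQ α (m + 1) = Q' at *
  generalize cfP α (m + 2) = P at *
  generalize cfQ α (m + 2) = Q at *
  generalize cfA α (m + 1) = a₁ at *
  generalize cfA α (m + 2) = a₂ at *
  have hQ'0 : (0 : ℝ) < Q' := by exact_mod_cast h5
  have hQ'Q : (Q' : ℝ) ≤ Q := by exact_mod_cast hQmono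
  have hQ0 : (0 : ℝ) < Q := by linarith
  have hdetR : (P' : ℝ) * Q - P * Q' = 1 := by exact_mod_cast hdet
  have hQleR : (Q : ℝ) ≤ (a₁ + 1) * Q' := by exact_mod_cast hQle
  have hrR : (r : ℝ) = d * P' - k * Q' := by rw [hr]; push_cast; ring
  have hsR : (s : ℝ) = k * Q - d * P := by rw [hs]; push_cast; ring
  have hP' : (α + 2.122 * e / ((n : ℝ) * Real.sqrt n)) * Q' < P' := by
    rw [← lt_div_iff₀ hQ'0]
    linarith
  have hgap : α * Q - P = f * (P' - α * Q') := by linarith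
  have hr0 : (0 : ℝ) < r := by
    have e1 := mul_lt_mul_of_pos_left hP' hd0
    have e2 := mul_lt_mul_of_pos_right hup hQ'0
    rw [hrR]
    linarith
  have hgap0 : 0 ≤ α * Q - P := by
    rw [hgap]
    apply mul_nonneg hf0
    have := mul_pos hc0 hQ'0
    linarith
  have hs0 : (0 : ℝ) < s := by
    have e1 := mul_nonneg hd0.le hgap0
    have e2 := mul_lt_mul_of_pos_right hlow hQ0
    rw [hsR]
    linarith
  have hdsum : (d : ℝ) = r * Q + s * Q' := by
    rw [hrR, hsR]
    linear_combination (-(d : ℝ)) * hdetR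
  have hsQ : (s : ℝ) * Q' < d := by linarith [mul_pos hr0 hQ0]
  have hrQ : (r : ℝ) * Q < d := by linarith [mul_pos hs0 hQ'0]
  have ha₂ : (0 : ℝ) ≤ a₂ := by
    have : (0 : ℤ) ≤ a₂ := by
      rw [ha2]
      exact Int.floor_nonneg.2 (by positivity)
    exact_mod_cast this
  have hlowQ : Real.sqrt n ≤ 2.122 * ((a₂ : ℝ) + 2) * Q ^ 2 := by
    by_cases hf : f = 0
    · have hpQ : (p : ℤ) ≤ Q := by
        refine prime_le_denominator hp hq hpq hn he hen (P := P) (by exact_mod_cast hQ0) ?_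
        have h := hterm hf
        rw [hα, div_mul_eq_mul_div, div_eq_iff hn0.ne'] at h
        exact_mod_cast h
      have hpQR : (p : ℝ) ≤ Q := by exact_mod_cast hpQ
      have hqpR : (q : ℝ) < 2 * p := by exact_mod_cast hqp
      have hp0 : (0 : ℝ) < p := by exact_mod_cast hp.pos
      have hnR : (n : ℝ) = p * q := by exact_mod_cast hn
      have hn1 : (1 : ℝ) ≤ n := by exact_mod_cast (show 1 ≤ n by omega)
      have hsqrt : Real.sqrt n ≤ n := Real.sqrt_le_iff.2 ⟨hn0.le, le_self_pow₀ hn1 two_ne_zero⟩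
      have hnQ : (n : ℝ) ≤ 2 * Q ^ 2 := by
        calc (n : ℝ) = p * q := hnR
          _ ≤ Q * (2 * Q) := by
            gcongr
            linarith
          _ = 2 * Q ^ 2 := by ring
      linarith [sq_nonneg (Q : ℝ), mul_nonneg ha₂ (sq_nonneg (Q : ℝ))]
    · have hfpos : 0 < f := lt_of_le_of_ne hf0 (Ne.symm hf)
      have hfa : 1 < (a₂ + 1) * f := by
        rw [← div_lt_iff₀ hfpos, ha2]
        exact Int.lt_floor_add_one _
      have hden : 0 < Q + f * Q' := by positivity
      have hval : (P' - α * Q') * (Q + f * Q') = 1 := by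
        linear_combination hdetR - (Q' : ℝ) * hrel
      have hY : 0 < P' - α * Q' := by
        refine pos_of_mul_pos_left ?_ hden.le
        rw [hval]
        exact one_pos
      -- `1 = (P' - αQ')(Q + fQ') ≤ (P' - αQ') f (a₂ + 2) Q`
      have hone : 1 ≤ (α * Q - P) * ((a₂ + 2) * Q) := by
        rw [hgap]
        have : Q + f * Q' ≤ f * ((a₂ + 2) * Q) := by
          have e1 := mul_le_mul_of_nonneg_right hfa.le hQ0.le
          have e2 := mul_le_mul_of_nonneg_left hQ'Q hf0
          linarith
        calc (1 : ℝ) = (P' - α * Q') * (Q + f * Q') := hval.symm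
          _ ≤ (P' - α * Q') * (f * ((a₂ + 2) * Q)) := by gcongr
          _ = _ := by ring
      have hc : (2.122 * (e : ℝ) / ((n : ℝ) * Real.sqrt n)) ≤ 2.122 / Real.sqrt n := by
        have : 2.122 * (e : ℝ) / ((n : ℝ) * Real.sqrt n) = α * (2.122 / Real.sqrt n) := by
          rw [hα]
          field_simp
        rw [this]
        exact mul_le_of_le_one_left (by positivity) hα1.le
      have hsmall : α * Q - P ≤ 2.122 / Real.sqrt n * Q := by
        have h := mul_le_mul_of_nonneg_right (hcase.trans hc) hQ0.le
        rwa [sub_mul, div_mul_cancel₀ _ hQ0.ne'] at h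
      have h : 1 ≤ 2.122 / Real.sqrt n * Q * ((a₂ + 2) * Q) :=
        hone.trans (by gcongr)
      calc Real.sqrt n = Real.sqrt n * 1 := by ring
        _ ≤ Real.sqrt n * (2.122 / Real.sqrt n * Q * ((a₂ + 2) * Q)) := by gcongr
        _ = _ := by field_simp
  have hroot : (n : ℝ) ^ ((1 : ℝ) / 4) = Real.sqrt (Real.sqrt n) := by
    rw [Real.sqrt_eq_rpow, Real.sqrt_eq_rpow, ← Real.rpow_mul hn0.le]
    norm_num
  have hR0 : 0 < (n : ℝ) ^ ((1 : ℝ) / 4) := by positivity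
  have hRQ : (n : ℝ) ^ ((1 : ℝ) / 4) ≤ Real.sqrt (2.122 * ((a₂ : ℝ) + 2)) * Q := by
    rw [hroot]
    calc Real.sqrt (Real.sqrt n) ≤ Real.sqrt (2.122 * ((a₂ : ℝ) + 2) * Q ^ 2) :=
          Real.sqrt_le_sqrt hlowQ
      _ = _ := by rw [Real.sqrt_mul (by positivity), Real.sqrt_sq hQ0.le]
  have hdQ : (d : ℝ) ≤ Real.sqrt (2.122 * ((a₂ : ℝ) + 2)) * D * Q := by
    rw [hD, mul_div_assoc', div_mul_eq_mul_div, le_div_iff₀ hR0]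
    have := mul_le_mul_of_nonneg_left hRQ hd0.le
    linarith
  refine ⟨by rwa [lt_div_iff₀ hQ'0], ?_, ?_⟩
  · exact lt_of_mul_lt_mul_right (hrQ.trans_le hdQ) hQ0.le
  · refine lt_of_mul_lt_mul_right (hsQ.trans_le (hdQ.trans ?_)) hQ'0.le
    have hD0 : 0 ≤ D := by
      rw [hD]
      positivity
    calc Real.sqrt (2.122 * ((a₂ : ℝ) + 2)) * D * Q
        ≤ Real.sqrt (2.122 * ((a₂ : ℝ) + 2)) * D * ((a₁ + 1) * Q') := by gcongr
      _ = _ := by ring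
end
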